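/- Let μ and μ̃ be Borel probability measures on X, p ≥ 1 and k > 0, set δ = ‖μ − μ̃‖_TV, and assume the condition (A1): W_{p,1−δ/10}(μ, μ̃) ≥ (1/2)·W_p(μ, μ̃). Then min{ δ/10, (1/(2k))·W_p(μ, μ̃) } ≤ RPW_{p,k}(μ, μ̃) ≤ min{ δ, (1/k)·W_p(μ, μ̃) }; in particular RPW_{p,k}(μ, μ̃) = Θ(min{δ, (1/k)·W_p(μ, μ̃)}). -/

import Mathlib

open MeasureTheory

noncomputable section

/-- `γ` is an `α`-partial transport plan from `μ` to `ν`: a Borel measure on `X × X` of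
total mass `α` whose first marginal is dominated by `μ` and second marginal by `ν`. -/
def IsPartialPlan {X : Type*} [MeasurableSpace X] (μ ν : Measure X) (α : ℝ)
    (γ : Measure (X × X)) : Prop :=
  γ Set.univ = ENNReal.ofReal α ∧ γ.map Prod.fst ≤ μ ∧ γ.map Prod.snd ≤ ν

/-- The cost `w_p(γ) = (∫ c(x,y)^p dγ)^(1/p)` of a transport plan. -/
def planCost {X : Type*} [MetricSpace X] [MeasurableSpace X] (p : ℝ)
    (γ : Measure (X × X)) : ℝ :=
  (∫ z, dist z.1 z.2 ^ p ∂γ) ^ (1 / p)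

/-- The `α`-partial `p`-Wasserstein distance `W_{p,α}(μ, ν)`. -/
def partialW {X : Type*} [MetricSpace X] [MeasurableSpace X] (p α : ℝ)
    (μ ν : Measure X) : ℝ :=
  sInf { c : ℝ | ∃ γ : Measure (X × X), IsPartialPlan μ ν α γ ∧ c = planCost p γ }

/-- The `(p,k)`-RPW distance: the least `ε ∈ [0,1]` with `W_{p,1-ε}(μ,ν) ≤ kε`. -/
def RPW {X : Type*} [MetricSpace X] [MeasurableSpace X] (p k : ℝ)
    (μ ν : Measure X) : ℝ :=
  sInf { ε : ℝ | ε ∈ Set.Icc (0:ℝ) 1 ∧ partialW p (1 - ε) μ ν ≤ k * ε }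

/-- The total variation distance `‖μ − ν‖_TV = sup { |μ(A) − ν(A)| : A Borel }`. -/
def TVdist {X : Type*} [MeasurableSpace X] (μ ν : Measure X) : ℝ :=
  sSup { r : ℝ | ∃ A : Set X, MeasurableSet A ∧ r = |(μ A).toReal - (ν A).toReal| }

/-!
A partial plan can be rescaled to any smaller mass without raising its cost, so `W_{p,α}` is
monotone in `α`. The upper bounds follow: the measure `μ ⊓ ν` has mass at least `1 - δ` and moves
along the diagonal for free, so `W_{p,1-δ} = 0`; and `W_{p,1-ε} ≤ W_p = kε` for `ε = W_p / k`.
For the lower bound, an admissible `ε < δ/10` satisfies `W_p / 2 ≤ W_{p,1-δ/10} ≤ W_{p,1-ε} ≤ kε`.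
-/

open Set

section TotalVariation

variable {X : Type*} [MeasurableSpace X]

lemma TVdist_nonneg (μ ν : Measure X) : 0 ≤ TVdist μ ν := by
  refine Real.sSup_nonneg ?_
  rintro _ ⟨A, -, rfl⟩
  exact abs_nonneg _

lemma TVdist_le_one (μ ν : Measure X) [IsProbabilityMeasure μ] [IsProbabilityMeasure ν] :
    TVdist μ ν ≤ 1 := by
  refine csSup_le ⟨_, ∅, .empty, rfl⟩ ?_
  rintro _ ⟨A, -, rfl⟩
  exact abs_sub_le_of_nonneg_of_le measureReal_nonneg measureReal_le_one
    measureReal_nonneg measureReal_le_one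

lemma abs_measureReal_sub_le_TVdist (μ ν : Measure X) [IsFiniteMeasure μ] [IsFiniteMeasure ν]
    {A : Set X} (hA : MeasurableSet A) : |μ.real A - ν.real A| ≤ TVdist μ ν := by
  refine le_csSup ⟨max (μ.real univ) (ν.real univ), ?_⟩ ⟨A, hA, rfl⟩
  rintro _ ⟨B, -, rfl⟩
  exact abs_sub_le_of_nonneg_of_le
    measureReal_nonneg (le_max_of_le_left (measureReal_mono (subset_univ B)))
    measureReal_nonneg (le_max_of_le_right (measureReal_mono (subset_univ B)))

lemma measureReal_univ_sub_TVdist_le_inf (μ ν : Measure X)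
    [IsFiniteMeasure μ] [IsFiniteMeasure ν] :
    μ.real univ - TVdist μ ν ≤ (μ ⊓ ν).real univ := by
  have h_finite : (μ ⊓ ν) univ ≠ ⊤ :=
    ne_top_of_le_ne_top (measure_ne_top μ univ) (Measure.le_iff'.1 inf_le_left univ)
  rw [measureReal_def (μ ⊓ ν), ← ENNReal.ofReal_le_iff_le_toReal h_finite,
    Measure.inf_apply .univ]
  refine le_sInf ?_
  rintro _ ⟨t, rfl⟩
  -- `t` need not be measurable; its measurable hull has the same `μ`-mass and a smaller complement.
  set s := toMeasurable μ t
  have hs : MeasurableSet s := measurableSet_toMeasurable μ t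
  calc ENNReal.ofReal (μ.real univ - TVdist μ ν)
      ≤ ENNReal.ofReal (μ.real s + ν.real sᶜ) := by
        refine ENNReal.ofReal_le_ofReal ?_
        have h_tv := (abs_le.1 (abs_measureReal_sub_le_TVdist μ ν hs.compl)).2
        have h_add := measureReal_add_measureReal_compl (μ := μ) hs
        linarith
    _ = μ s + ν sᶜ := by
        rw [ENNReal.ofReal_add measureReal_nonneg measureReal_nonneg,
          ofReal_measureReal, ofReal_measureReal]
    _ ≤ μ t + ν tᶜ := by
        refine add_le_add (measure_toMeasurable t).le (measure_mono ?_)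
        exact compl_subset_compl.2 (subset_toMeasurable μ t)
    _ = μ (t ∩ univ) + ν (tᶜ ∩ univ) := by rw [inter_univ, inter_univ]

end TotalVariation

section PartialPlan

variable {X : Type*} [MeasurableSpace X] {μ ν : Measure X}

lemma IsPartialPlan.smul {β c : ℝ} {γ : Measure (X × X)} (hγ : IsPartialPlan μ ν β γ)
    (hc₀ : 0 ≤ c) (hc₁ : c ≤ 1) : IsPartialPlan μ ν (c * β) (ENNReal.ofReal c • γ) := by
  have smul_le (ρ : Measure X) : ENNReal.ofReal c • ρ ≤ ρ :=
    Measure.le_iff'.2 fun s ↦ mul_le_of_le_one_left' (ENNReal.ofReal_le_one.2 hc₁)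
  refine ⟨?_, ?_, ?_⟩
  · rw [Measure.smul_apply, smul_eq_mul, hγ.1, ← ENNReal.ofReal_mul hc₀]
  · rw [Measure.map_smul]
    exact (smul_le _).trans hγ.2.1
  · rw [Measure.map_smul]
    exact (smul_le _).trans hγ.2.2

lemma isPartialPlan_prod [IsProbabilityMeasure μ] [IsProbabilityMeasure ν] :
    IsPartialPlan μ ν 1 (μ.prod ν) :=
  ⟨by simp, by simp, by simp⟩

lemma exists_isPartialPlan [IsProbabilityMeasure μ] [IsProbabilityMeasure ν] {α : ℝ}
    (hα₀ : 0 ≤ α) (hα₁ : α ≤ 1) : ∃ γ, IsPartialPlan μ ν α γ :=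
  ⟨_, mul_one α ▸ isPartialPlan_prod.smul hα₀ hα₁⟩

lemma isPartialPlan_map_diag {ρ : Measure X} [IsFiniteMeasure ρ] (hμ : ρ ≤ μ) (hν : ρ ≤ ν) :
    IsPartialPlan μ ν (ρ.real univ) (ρ.map fun x ↦ (x, x)) := by
  have h_diag : Measurable fun x : X ↦ (x, x) := measurable_id.prodMk measurable_id
  refine ⟨?_, ?_, ?_⟩
  · rw [Measure.map_apply h_diag .univ, preimage_univ, ofReal_measureReal]
  · rw [Measure.map_map measurable_fst h_diag]
    exact Measure.map_id.trans_le hμ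
  · rw [Measure.map_map measurable_snd h_diag]
    exact Measure.map_id.trans_le hν

end PartialPlan

section Cost

variable {X : Type*} [MetricSpace X] [MeasurableSpace X] {p : ℝ}

lemma integral_dist_rpow_nonneg (p : ℝ) (γ : Measure (X × X)) :
    0 ≤ ∫ z, dist z.1 z.2 ^ p ∂γ :=
  integral_nonneg fun _ ↦ Real.rpow_nonneg dist_nonneg _

lemma planCost_nonneg (p : ℝ) (γ : Measure (X × X)) : 0 ≤ planCost p γ :=
  Real.rpow_nonneg (integral_dist_rpow_nonneg p γ) _

lemma planCost_smul_le (hp : 0 ≤ p) {c : ℝ} (hc₀ : 0 ≤ c) (hc₁ : c ≤ 1)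
    (γ : Measure (X × X)) : planCost p (ENNReal.ofReal c • γ) ≤ planCost p γ := by
  have h_int := integral_dist_rpow_nonneg p γ
  rw [planCost, planCost, integral_smul_measure, ENNReal.toReal_ofReal hc₀, smul_eq_mul]
  exact Real.rpow_le_rpow (mul_nonneg hc₀ h_int) (mul_le_of_le_one_left h_int hc₁)
    (one_div_nonneg.2 hp)

lemma planCost_map_diag [SecondCountableTopology X] [OpensMeasurableSpace X] (hp : p ≠ 0)
    (ρ : Measure X) : planCost p (ρ.map fun x ↦ (x, x)) = 0 := by
  have h_diag : Measurable fun x : X ↦ (x, x) := measurable_id.prodMk measurable_id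
  have h_cost : Measurable fun z : X × X ↦ dist z.1 z.2 ^ p := measurable_dist.pow_const p
  rw [planCost, integral_map h_diag.aemeasurable h_cost.aestronglyMeasurable]
  simp only [dist_self, Real.zero_rpow hp, integral_zero, Real.zero_rpow (one_div_ne_zero hp)]

end Cost

section PartialWasserstein

variable {X : Type*} [MetricSpace X] [MeasurableSpace X] {μ ν : Measure X} {p α β : ℝ}

lemma partialW_nonneg (p α : ℝ) (μ ν : Measure X) : 0 ≤ partialW p α μ ν := by
  refine Real.sInf_nonneg ?_
  rintro _ ⟨γ, -, rfl⟩
  exact planCost_nonneg p γ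

lemma IsPartialPlan.partialW_le_planCost {γ : Measure (X × X)} (hγ : IsPartialPlan μ ν α γ)
    (p : ℝ) : partialW p α μ ν ≤ planCost p γ := by
  refine csInf_le ⟨0, ?_⟩ ⟨γ, hγ, rfl⟩
  rintro _ ⟨γ, -, rfl⟩
  exact planCost_nonneg p γ

lemma IsPartialPlan.partialW_le_planCost_of_le {γ : Measure (X × X)}
    (hγ : IsPartialPlan μ ν β γ) (hp : 0 ≤ p) (hα : 0 ≤ α) (hαβ : α ≤ β) :
    partialW p α μ ν ≤ planCost p γ := by
  have hβ : 0 ≤ β := hα.trans hαβ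
  have h_ratio₀ : 0 ≤ α / β := div_nonneg hα hβ
  have h_ratio₁ : α / β ≤ 1 := div_le_one_of_le₀ hαβ hβ
  have h_mass : α / β * β = α := div_mul_cancel_of_imp fun h ↦ le_antisymm (h ▸ hαβ) hα
  have h_plan : IsPartialPlan μ ν α (ENNReal.ofReal (α / β) • γ) := by
    simpa only [h_mass] using hγ.smul h_ratio₀ h_ratio₁
  exact (h_plan.partialW_le_planCost p).trans (planCost_smul_le hp h_ratio₀ h_ratio₁ γ)

lemma partialW_zero (hp : p ≠ 0) : partialW p 0 μ ν = 0 := by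
  have h_plan : IsPartialPlan μ ν 0 0 :=
    ⟨by simp, by simp [Measure.zero_le], by simp [Measure.zero_le]⟩
  have h_cost : planCost p (0 : Measure (X × X)) = 0 := by
    rw [planCost, integral_zero_measure, Real.zero_rpow (one_div_ne_zero hp)]
  exact le_antisymm (h_cost ▸ h_plan.partialW_le_planCost p) (partialW_nonneg p 0 μ ν)

lemma partialW_mono (hp : 0 ≤ p) (hα : 0 ≤ α) (hαβ : α ≤ β)
    (hβ : ∃ γ, IsPartialPlan μ ν β γ) : partialW p α μ ν ≤ partialW p β μ ν := by
  obtain ⟨γ₀, hγ₀⟩ := hβ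
  refine le_csInf ⟨_, γ₀, hγ₀, rfl⟩ ?_
  rintro _ ⟨γ, hγ, rfl⟩
  exact hγ.partialW_le_planCost_of_le hp hα hαβ

lemma partialW_eq_zero_of_le_inf [SecondCountableTopology X] [OpensMeasurableSpace X]
    [IsFiniteMeasure μ] (hp : 0 < p) (hα : 0 ≤ α) (hα_inf : α ≤ (μ ⊓ ν).real univ) :
    partialW p α μ ν = 0 := by
  have : IsFiniteMeasure (μ ⊓ ν) := isFiniteMeasure_of_le μ inf_le_left
  have h_plan : IsPartialPlan μ ν _ _ := isPartialPlan_map_diag inf_le_left inf_le_right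
  have h_le := h_plan.partialW_le_planCost_of_le hp.le hα hα_inf
  exact le_antisymm (planCost_map_diag hp.ne' (μ ⊓ ν) ▸ h_le) (partialW_nonneg p α μ ν)

lemma partialW_one_sub_TVdist [SecondCountableTopology X] [OpensMeasurableSpace X]
    [IsProbabilityMeasure μ] [IsProbabilityMeasure ν] (hp : 0 < p) :
    partialW p (1 - TVdist μ ν) μ ν = 0 := by
  refine partialW_eq_zero_of_le_inf hp (sub_nonneg.2 (TVdist_le_one μ ν)) ?_
  simpa only [probReal_univ] using measureReal_univ_sub_TVdist_le_inf μ ν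

end PartialWasserstein

section RPWBounds

variable {X : Type*} [MetricSpace X] [MeasurableSpace X] {μ ν : Measure X} {p k ε : ℝ}

lemma RPW_le (hε₀ : 0 ≤ ε) (hε₁ : ε ≤ 1) (hε : partialW p (1 - ε) μ ν ≤ k * ε) :
    RPW p k μ ν ≤ ε :=
  csInf_le ⟨0, fun _ h ↦ h.1.1⟩ ⟨⟨hε₀, hε₁⟩, hε⟩

lemma one_mem_setOf_partialW_le (hp : p ≠ 0) (hk : 0 ≤ k) :
    (1 : ℝ) ∈ {ε | ε ∈ Icc (0 : ℝ) 1 ∧ partialW p (1 - ε) μ ν ≤ k * ε} :=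
  ⟨⟨zero_le_one, le_rfl⟩, by rwa [sub_self, partialW_zero hp, mul_one]⟩

lemma RPW_le_one (hp : p ≠ 0) (hk : 0 ≤ k) : RPW p k μ ν ≤ 1 :=
  RPW_le zero_le_one le_rfl (one_mem_setOf_partialW_le hp hk).2

variable [IsProbabilityMeasure μ] [IsProbabilityMeasure ν]

lemma RPW_le_TVdist [SecondCountableTopology X] [OpensMeasurableSpace X] (hp : 0 < p)
    (hk : 0 ≤ k) : RPW p k μ ν ≤ TVdist μ ν := by
  refine RPW_le (TVdist_nonneg μ ν) (TVdist_le_one μ ν) ?_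
  rw [partialW_one_sub_TVdist hp]
  exact mul_nonneg hk (TVdist_nonneg μ ν)

lemma RPW_le_partialW_div (hp : 0 < p) (hk : 0 < k) :
    RPW p k μ ν ≤ partialW p 1 μ ν / k := by
  set ε := partialW p 1 μ ν / k
  have hε₀ : 0 ≤ ε := div_nonneg (partialW_nonneg p 1 μ ν) hk.le
  rcases le_or_gt ε 1 with hε₁ | hε₁
  · refine RPW_le hε₀ hε₁ ?_
    calc partialW p (1 - ε) μ ν
        ≤ partialW p 1 μ ν := partialW_mono hp.le (sub_nonneg.2 hε₁) (sub_le_self 1 hε₀)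
          (exists_isPartialPlan zero_le_one le_rfl)
      _ = k * ε := (mul_div_cancel₀ _ hk.ne').symm
  · exact (RPW_le_one hp.ne' hk.le).trans hε₁.le

lemma min_le_RPW (hp : 0 < p) (hk : 0 < k) (hε₁ : ε ≤ 1) :
    min ε (partialW p (1 - ε) μ ν / k) ≤ RPW p k μ ν := by
  refine le_csInf ⟨1, one_mem_setOf_partialW_le hp.ne' hk.le⟩ ?_
  rintro η ⟨⟨hη₀, hη₁⟩, hη⟩
  rcases le_or_gt ε η with h | h
  · exact min_le_of_left_le h
  · refine min_le_of_right_le ((div_le_iff₀' hk).2 ?_)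
    calc partialW p (1 - ε) μ ν
        ≤ partialW p (1 - η) μ ν := partialW_mono hp.le (sub_nonneg.2 hε₁)
          (sub_le_sub_left h.le 1)
          (exists_isPartialPlan (sub_nonneg.2 hη₁) (sub_le_self 1 hη₀))
      _ ≤ k * η := hη

end RPWBounds

-- On a bounded space no plan of finite mass has a divergent cost, whose Bochner integral would
-- take the junk value `0`.
theorem rpw_theta_of_min_general
    {X : Type*} [MetricSpace X] [BoundedSpace X] [SecondCountableTopology X]
    [MeasurableSpace X] [OpensMeasurableSpace X]
    (μ ν : Measure X) [IsProbabilityMeasure μ] [IsProbabilityMeasure ν]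
    {p k : ℝ} (hp : 0 < p) (hk : 0 < k) {δ : ℝ} (hδ : δ = TVdist μ ν)
    (hA1 : (1 / 2) * partialW p 1 μ ν ≤ partialW p (1 - δ / 10) μ ν) :
    min (δ / 10) ((1 / (2 * k)) * partialW p 1 μ ν) ≤ RPW p k μ ν ∧
    RPW p k μ ν ≤ min δ ((1 / k) * partialW p 1 μ ν) := by
  constructor
  · have h_half : 1 / (2 * k) * partialW p 1 μ ν ≤ partialW p (1 - δ / 10) μ ν / k := by
      rw [one_div_mul_eq_div, ← div_div]
      gcongr
      linarith
    have hδ₁ : δ / 10 ≤ 1 := by linarith [TVdist_le_one μ ν]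
    exact (min_le_min_left _ h_half).trans (min_le_RPW hp hk hδ₁)
  · rw [one_div_mul_eq_div, hδ]
    exact le_min (RPW_le_TVdist hp hk.le) (RPW_le_partialW_div hp hk)

/-- With `δ = ‖μ − μ̃‖_TV` and assumption (A1):
`W_{p,1−δ/10}(μ, μ̃) ≥ (1/2)·W_p(μ, μ̃)`, one has
`min {δ/10, (1/(2k))·W_p(μ, μ̃)} ≤ RPW_{p,k}(μ, μ̃) ≤ min {δ, (1/k)·W_p(μ, μ̃)}`,
i.e. `RPW_{p,k}(μ, μ̃) = Θ(min {δ, (1/k)·W_p(μ, μ̃)})`. -/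
theorem rpw_theta_of_min
    {X : Type*} [MetricSpace X] [CompactSpace X] [MeasurableSpace X] [BorelSpace X]
    (hdiam : ∀ a b : X, dist a b ≤ 1)
    (μ μt : Measure X) [IsProbabilityMeasure μ] [IsProbabilityMeasure μt]
    (p k : ℝ) (hp : 1 ≤ p) (hk : 0 < k)
    (δ : ℝ) (hδ : δ = TVdist μ μt)
    (hA1 : (1 / 2) * partialW p 1 μ μt ≤ partialW p (1 - δ / 10) μ μt) :
    min (δ / 10) ((1 / (2 * k)) * partialW p 1 μ μt) ≤ RPW p k μ μt ∧
    RPW p k μ μt ≤ min δ ((1 / k) * partialW p 1 μ μt) := by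
  exact rpw_theta_of_min_general μ μt (zero_lt_one.trans_le hp) hk hδ hA1
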